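/- Let T, E₁, E₂ : ℝ × ℝ → ℝ³ and k₁, k₂ : ℝ × ℝ → ℝ be smooth, and suppose that for each fixed t the frame satisfies Tₛ = k₁E₁ + k₂E₂, (E₁)ₛ = k₁T, (E₂)ₛ = k₂T, and that T_t = −(k₂)ₛE₁ + (k₁)ₛE₂, (E₁)_t = −(k₂)ₛT + uE₂, (E₂)_t = (k₁)ₛT − uE₁ for a smooth function u : ℝ × ℝ → ℝ, where (T, E₁, E₂) is pairwise ⟨·,·⟩_L-orthogonal with ⟨T,T⟩_L = −1, ⟨E₁,E₁⟩_L = ⟨E₂,E₂⟩_L = 1. Then uₛ = k₁(k₁)ₛ + k₂(k₂)ₛ; consequently, for each t there is a constant c(t) with u(s,t) = ½(k₁² + k₂²)(s,t) + c(t). -/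

import Mathlib

noncomputable section

open Real

/-- Minkowski 3-space: ℝ³ as a vector type. -/
abbrev V3 : Type := Fin 3 → ℝ

/-- Lorentzian inner product ⟨x,y⟩_L = −x₁y₁ + x₂y₂ + x₃y₃ on ℝ³. -/
def lor (x y : V3) : ℝ := -(x 0 * y 0) + x 1 * y 1 + x 2 * y 2

/-- Lorentzian cross product x ×_L y = (x₃y₂ − x₂y₃, x₃y₁ − x₁y₃, x₁y₂ − x₂y₁). -/
def lcross (x y : V3) : V3 :=
  ![x 2 * y 1 - x 1 * y 2, x 2 * y 0 - x 0 * y 2, x 0 * y 1 - x 1 * y 0]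

/-- Partial derivative with respect to the first variable `s`. -/
def pds {E : Type*} [NormedAddCommGroup E] [NormedSpace ℝ E]
    (f : ℝ × ℝ → E) (p : ℝ × ℝ) : E := deriv (fun s => f (s, p.2)) p.1

/-- Partial derivative with respect to the second variable `t`. -/
def pdt {E : Type*} [NormedAddCommGroup E] [NormedSpace ℝ E]
    (f : ℝ × ℝ → E) (p : ℝ × ℝ) : E := deriv (fun t => f (p.1, t)) p.2

/-!
Equality of the mixed derivatives `(E₁)ₛₜ = (E₁)ₜₛ`, expanded with the frame equations, is a linear
relation between `T` and `E₂`: the two `E₁` terms `-k₁(k₂)ₛE₁` cancel. Since `T` and `E₂` are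
linearly independent, the coefficient of `E₂`, which is `k₁(k₁)ₛ + k₂(k₂)ₛ - uₛ`, vanishes. As
`k₁(k₁)ₛ + k₂(k₂)ₛ` is the `s`-derivative of `½(k₁² + k₂²)`, the formula for `u` follows by
integration in `s`.
-/

section SecondDerivative

open Topology

variable {E F : Type*} [NormedAddCommGroup E] [NormedSpace ℝ E] [NormedAddCommGroup F]
  [NormedSpace ℝ F] {f : F → E} {x : F}

theorem eventually_differentiableAt (hf : ContDiffAt ℝ 1 f x) :
    ∀ᶠ y in 𝓝 x, DifferentiableAt ℝ f y :=
  (hf.eventually (by simp)).mono fun _ hy => hy.differentiableAt one_ne_zero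

theorem hasFDerivAt_fderiv_apply (hf : ContDiffAt ℝ 2 f x) (v : F) :
    HasFDerivAt (fun y => fderiv ℝ f y v) ((fderiv ℝ (fderiv ℝ f) x).flip v) x := by
  have hf' : DifferentiableAt ℝ (fderiv ℝ f) x :=
    (hf.fderiv_right (m := 1) (by norm_num)).differentiableAt one_ne_zero
  simpa using hf'.hasFDerivAt.clm_apply (hasFDerivAt_const v x)

end SecondDerivative

section PartialDerivatives

variable {E : Type*} [NormedAddCommGroup E] [NormedSpace ℝ E] {f g : ℝ × ℝ → E}
  {c : ℝ × ℝ → ℝ} {p : ℝ × ℝ}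

theorem hasDerivAt_slice_fst_fderiv (hf : DifferentiableAt ℝ f p) :
    HasDerivAt (fun s => f (s, p.2)) (fderiv ℝ f p (1, 0)) p.1 :=
  hf.hasFDerivAt.comp_hasDerivAt p.1 ((hasDerivAt_id p.1).prodMk (hasDerivAt_const p.1 p.2))

theorem hasDerivAt_slice_snd_fderiv (hf : DifferentiableAt ℝ f p) :
    HasDerivAt (fun t => f (p.1, t)) (fderiv ℝ f p (0, 1)) p.2 :=
  hf.hasFDerivAt.comp_hasDerivAt p.2 ((hasDerivAt_const p.2 p.1).prodMk (hasDerivAt_id p.2))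

theorem pds_eq_fderiv (hf : DifferentiableAt ℝ f p) : pds f p = fderiv ℝ f p (1, 0) :=
  (hasDerivAt_slice_fst_fderiv hf).deriv

theorem pdt_eq_fderiv (hf : DifferentiableAt ℝ f p) : pdt f p = fderiv ℝ f p (0, 1) :=
  (hasDerivAt_slice_snd_fderiv hf).deriv

theorem hasDerivAt_pds (hf : DifferentiableAt ℝ f p) :
    HasDerivAt (fun s => f (s, p.2)) (pds f p) p.1 :=
  (hasDerivAt_slice_fst_fderiv hf).differentiableAt.hasDerivAt

theorem hasDerivAt_pdt (hf : DifferentiableAt ℝ f p) :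
    HasDerivAt (fun t => f (p.1, t)) (pdt f p) p.2 :=
  (hasDerivAt_slice_snd_fderiv hf).differentiableAt.hasDerivAt

theorem pds_add (hf : DifferentiableAt ℝ f p) (hg : DifferentiableAt ℝ g p) :
    pds (fun q => f q + g q) p = pds f p + pds g p :=
  ((hasDerivAt_pds hf).add (hasDerivAt_pds hg)).deriv

theorem pds_neg : pds (fun q => -f q) p = -pds f p :=
  deriv.fun_neg

theorem pds_smul (hc : DifferentiableAt ℝ c p) (hf : DifferentiableAt ℝ f p) :
    pds (fun q => c q • f q) p = c p • pds f p + pds c p • f p :=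
  ((hasDerivAt_pds hc).smul (hasDerivAt_pds hf)).deriv

theorem pdt_smul (hc : DifferentiableAt ℝ c p) (hf : DifferentiableAt ℝ f p) :
    pdt (fun q => c q • f q) p = c p • pdt f p + pdt c p • f p :=
  ((hasDerivAt_pdt hc).smul (hasDerivAt_pdt hf)).deriv

theorem hasFDerivAt_pds (hf : ContDiffAt ℝ 2 f p) :
    HasFDerivAt (pds f) ((fderiv ℝ (fderiv ℝ f) p).flip (1, 0)) p :=
  (hasFDerivAt_fderiv_apply hf (1, 0)).congr_of_eventuallyEq <|
    (eventually_differentiableAt (hf.of_le one_le_two)).mono fun _ => pds_eq_fderiv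

theorem hasFDerivAt_pdt (hf : ContDiffAt ℝ 2 f p) :
    HasFDerivAt (pdt f) ((fderiv ℝ (fderiv ℝ f) p).flip (0, 1)) p :=
  (hasFDerivAt_fderiv_apply hf (0, 1)).congr_of_eventuallyEq <|
    (eventually_differentiableAt (hf.of_le one_le_two)).mono fun _ => pdt_eq_fderiv

theorem pdt_pds_eq_pds_pdt (hf : ContDiffAt ℝ 2 f p) : pdt (pds f) p = pds (pdt f) p := by
  have hsymm : IsSymmSndFDerivAt ℝ f p := hf.isSymmSndFDerivAt (by simp)
  have hs := hasFDerivAt_pds hf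
  have ht := hasFDerivAt_pdt hf
  rw [pdt_eq_fderiv hs.differentiableAt, pds_eq_fderiv ht.differentiableAt, hs.fderiv, ht.fderiv]
  exact hsymm.eq (0, 1) (1, 0)

theorem exists_eq_add_const_of_pds_eq (hf : Differentiable ℝ f) (hg : Differentiable ℝ g) {t : ℝ}
    (h : ∀ s, pds f (s, t) = pds g (s, t)) : ∃ a, ∀ s, f (s, t) = g (s, t) + a := by
  have hderiv (s : ℝ) : HasDerivAt (fun s => f (s, t) - g (s, t)) 0 s :=
    ((hasDerivAt_pds (hf (s, t))).sub (hasDerivAt_pds (hg (s, t)))).congr_deriv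
      (sub_eq_zero.mpr (h s))
  have hconst (s : ℝ) : f (s, t) - g (s, t) = f (0, t) - g (0, t) :=
    is_const_of_deriv_eq_zero (fun s => (hderiv s).differentiableAt) (fun s => (hderiv s).deriv) s 0
  exact ⟨f (0, t) - g (0, t), fun s => eq_add_of_sub_eq' (hconst s)⟩

theorem pds_half_sum_sq {a b : ℝ × ℝ → ℝ} (ha : DifferentiableAt ℝ a p)
    (hb : DifferentiableAt ℝ b p) :
    pds (fun q => (a q ^ 2 + b q ^ 2) / 2) p = a p * pds a p + b p * pds b p := by
  have h := (((hasDerivAt_pds ha).pow 2).add ((hasDerivAt_pds hb).pow 2)).div_const 2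
  refine h.deriv.trans ?_
  push_cast
  ring

end PartialDerivatives

section Lorentz

theorem lor_comm (x y : V3) : lor x y = lor y x := by
  unfold lor
  ring

theorem lor_smul_add_smul_left (a b : ℝ) (x y z : V3) :
    lor (a • x + b • y) z = a * lor x z + b * lor y z := by
  simp only [lor, Pi.add_apply, Pi.smul_apply, smul_eq_mul]
  ring

theorem linearIndependent_pair_of_lor_eq_zero {x y : V3} (hxy : lor x y = 0)
    (hx : lor x x ≠ 0) (hy : lor y y ≠ 0) : LinearIndependent ℝ ![x, y] := by
  refine LinearIndependent.pair_iff.mpr fun a b hab => ?_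
  have hpair (z : V3) : a * lor x z + b * lor y z = 0 := by
    rw [← lor_smul_add_smul_left, hab]
    simp [lor]
  constructor
  · simpa [lor_comm y x, hxy, hx] using hpair x
  · simpa [hxy, hy] using hpair y

end Lorentz

section FrameCompatibility

variable {V : Type*} [NormedAddCommGroup V] [NormedSpace ℝ V] {T E₁ E₂ : ℝ × ℝ → V}
  {k₁ k₂ u : ℝ × ℝ → ℝ}

theorem smul_add_smul_eq_zero_of_frame_equations {p : ℝ × ℝ} (hT : DifferentiableAt ℝ T p)
    (hE₁ : ContDiffAt ℝ 2 E₁ p) (hE₂ : DifferentiableAt ℝ E₂ p) (hk₁ : DifferentiableAt ℝ k₁ p)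
    (hk₂ : ContDiffAt ℝ 2 k₂ p) (hu : DifferentiableAt ℝ u p)
    (hTs : pds T p = k₁ p • E₁ p + k₂ p • E₂ p)
    (hE₁s : ∀ q, pds E₁ q = k₁ q • T q)
    (hE₂s : pds E₂ p = k₂ p • T p)
    (hTt : pdt T p = -(pds k₂ p) • E₁ p + (pds k₁ p) • E₂ p)
    (hE₁t : ∀ q, pdt E₁ q = -(pds k₂ q) • T q + u q • E₂ q) :
    (pdt k₁ p + pds (pds k₂) p - u p * k₂ p) • T p +
      (k₁ p * pds k₁ p + k₂ p * pds k₂ p - pds u p) • E₂ p = 0 := by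
  have hk₂s : DifferentiableAt ℝ (fun q => -pds k₂ q) p :=
    (hasFDerivAt_pds hk₂).differentiableAt.neg
  have hst : pdt (pds E₁) p =
      k₁ p • (-(pds k₂ p) • E₁ p + pds k₁ p • E₂ p) + pdt k₁ p • T p := by
    rw [funext hE₁s, pdt_smul hk₁ hT, hTt]
  have hts : pds (pdt E₁) p =
      (-(pds k₂ p) • (k₁ p • E₁ p + k₂ p • E₂ p) + -(pds (pds k₂) p) • T p) +
        (u p • k₂ p • T p + pds u p • E₂ p) := by
    rw [funext hE₁t, pds_add (hk₂s.fun_smul hT) (hu.fun_smul hE₂), pds_smul hk₂s hT,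
      pds_smul hu hE₂, pds_neg, hTs, hE₂s]
  have hmixed := pdt_pds_eq_pds_pdt hE₁
  rw [hst, hts] at hmixed
  linear_combination (norm := module) hmixed

theorem statement4_general (hT : Differentiable ℝ T) (hE₁ : ContDiff ℝ 2 E₁)
    (hE₂ : Differentiable ℝ E₂) (hk₁ : Differentiable ℝ k₁) (hk₂ : ContDiff ℝ 2 k₂)
    (hu : Differentiable ℝ u)
    (hTE₂ : ∀ p, LinearIndependent ℝ ![T p, E₂ p])
    (hTs : ∀ p, pds T p = k₁ p • E₁ p + k₂ p • E₂ p)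
    (hE₁s : ∀ p, pds E₁ p = k₁ p • T p)
    (hE₂s : ∀ p, pds E₂ p = k₂ p • T p)
    (hTt : ∀ p, pdt T p = -(pds k₂ p) • E₁ p + (pds k₁ p) • E₂ p)
    (hE₁t : ∀ p, pdt E₁ p = -(pds k₂ p) • T p + u p • E₂ p) :
    (∀ p, pds u p = k₁ p * pds k₁ p + k₂ p * pds k₂ p) ∧
    (∀ t : ℝ, ∃ c : ℝ, ∀ s : ℝ,
      u (s, t) = (k₁ (s, t) ^ 2 + k₂ (s, t) ^ 2) / 2 + c) := by
  have hk₂' : Differentiable ℝ k₂ := hk₂.differentiable two_ne_zero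
  have hus (p : ℝ × ℝ) : pds u p = k₁ p * pds k₁ p + k₂ p * pds k₂ p := by
    have hzero := smul_add_smul_eq_zero_of_frame_equations (hT p) hE₁.contDiffAt (hE₂ p) (hk₁ p)
      hk₂.contDiffAt (hu p) (hTs p) hE₁s (hE₂s p) (hTt p) hE₁t
    exact (sub_eq_zero.mp (LinearIndependent.pair_iff.mp (hTE₂ p) _ _ hzero).2).symm
  refine ⟨hus, fun t => ?_⟩
  refine exists_eq_add_const_of_pds_eq (g := fun q => (k₁ q ^ 2 + k₂ q ^ 2) / 2)
    hu (by fun_prop) fun s => ?_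
  rw [hus, pds_half_sum_sq (hk₁ _) (hk₂' _)]

end FrameCompatibility

/-- For a parallel frame `(T,E₁,E₂)` of signature `(−,+,+)`
satisfying `Tₛ = k₁E₁ + k₂E₂`, `(E₁)ₛ = k₁T`, `(E₂)ₛ = k₂T` and time evolution
`T_t = −(k₂)ₛE₁ + (k₁)ₛE₂`, `(E₁)_t = −(k₂)ₛT + uE₂`, `(E₂)_t = (k₁)ₛT − uE₁`,
one has `uₛ = k₁(k₁)ₛ + k₂(k₂)ₛ`, hence `u(s,t) = ½(k₁² + k₂²)(s,t) + c(t)`. -/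
theorem statement4 (T E₁ E₂ : ℝ × ℝ → V3) (k₁ k₂ u : ℝ × ℝ → ℝ)
    (hT : ContDiff ℝ (⊤ : ℕ∞) T) (hE₁ : ContDiff ℝ (⊤ : ℕ∞) E₁) (hE₂ : ContDiff ℝ (⊤ : ℕ∞) E₂)
    (hk₁ : ContDiff ℝ (⊤ : ℕ∞) k₁) (hk₂ : ContDiff ℝ (⊤ : ℕ∞) k₂) (hu : ContDiff ℝ (⊤ : ℕ∞) u)
    (hTT : ∀ p, lor (T p) (T p) = -1)
    (hE₁E₁ : ∀ p, lor (E₁ p) (E₁ p) = 1)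
    (hE₂E₂ : ∀ p, lor (E₂ p) (E₂ p) = 1)
    (hTE₁ : ∀ p, lor (T p) (E₁ p) = 0)
    (hTE₂ : ∀ p, lor (T p) (E₂ p) = 0)
    (hE₁E₂ : ∀ p, lor (E₁ p) (E₂ p) = 0)
    (hTs : ∀ p, pds T p = k₁ p • E₁ p + k₂ p • E₂ p)
    (hE₁s : ∀ p, pds E₁ p = k₁ p • T p)
    (hE₂s : ∀ p, pds E₂ p = k₂ p • T p)
    (hTt : ∀ p, pdt T p = -(pds k₂ p) • E₁ p + (pds k₁ p) • E₂ p)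
    (hE₁t : ∀ p, pdt E₁ p = -(pds k₂ p) • T p + u p • E₂ p)
    (hE₂t : ∀ p, pdt E₂ p = (pds k₁ p) • T p - u p • E₁ p) :
    (∀ p, pds u p = k₁ p * pds k₁ p + k₂ p * pds k₂ p) ∧
    (∀ t : ℝ, ∃ c : ℝ, ∀ s : ℝ,
      u (s, t) = (k₁ (s, t) ^ 2 + k₂ (s, t) ^ 2) / 2 + c) := by
  have two_le : (2 : WithTop ℕ∞) ≤ (⊤ : ℕ∞) := WithTop.coe_le_coe.2 le_top
  have hTE₂_indep (p : ℝ × ℝ) : LinearIndependent ℝ ![T p, E₂ p] :=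
    linearIndependent_pair_of_lor_eq_zero (hTE₂ p) (by simp [hTT]) (by simp [hE₂E₂])
  exact statement4_general (hT.differentiable (by simp)) (hE₁.of_le two_le)
    (hE₂.differentiable (by simp)) (hk₁.differentiable (by simp)) (hk₂.of_le two_le)
    (hu.differentiable (by simp)) hTE₂_indep hTs hE₁s hE₂s hTt hE₁t
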